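/- Every element of the orthogonal group O(n, ℝ) is a product of two involutions. -/

import Mathlib

open Module in
/-- A subspace `K` adapted to a symmetric `H` and a skew `J` with `J ∘ J = H ∘ H - 4`. -/
theorem exists_adapted_subspace {E : Type*} [NormedAddCommGroup E] [InnerProductSpace ℝ E]
    [FiniteDimensional ℝ E] (H J : E →ₗ[ℝ] E)
    (hH : ∀ x y, inner ℝ (H x) y = inner ℝ x (H y))
    (hJ : ∀ x y, inner ℝ (J x) y = - inner ℝ x (J y))
    (hJJ : ∀ x, J (J x) = H (H x) - (4 : ℝ) • x)
    (hHJ : ∀ x, H (J x) = J (H x)) :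
    ∃ K : Submodule ℝ E, (∀ x ∈ K, H x ∈ K) ∧ (∀ x ∈ K, J x ∈ Kᗮ) ∧ (∀ x ∈ Kᗮ, J x ∈ K) := by
  obtain ⟨K, ⟨hK1, hK2⟩, hmax⟩ := (wellFounded_gt (α := Submodule ℝ E)).has_min
    {K | (∀ x ∈ K, H x ∈ K) ∧ (∀ x ∈ K, J x ∈ Kᗮ)} ⟨⊥, by simp, by simp⟩
  refine ⟨K, hK1, hK2, ?_⟩
  set N : Submodule ℝ E := K ⊔ K.map J with hN
  have hJ2 : ∀ x ∈ K, J (J x) ∈ K := fun x hx => by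
    rw [hJJ]; exact K.sub_mem (hK1 _ (hK1 _ hx)) (K.smul_mem _ hx)
  have hNH : ∀ x ∈ N, H x ∈ N := by
    intro x hx
    obtain ⟨y, hy, z, hz, rfl⟩ := Submodule.mem_sup.1 hx
    obtain ⟨w, hw, rfl⟩ := hz
    rw [map_add, hHJ]
    exact Submodule.add_mem_sup (hK1 _ hy) (Submodule.mem_map_of_mem (hK1 _ hw))
  have hNJ : ∀ x ∈ N, J x ∈ N := by
    intro x hx
    obtain ⟨y, hy, z, hz, rfl⟩ := Submodule.mem_sup.1 hx
    obtain ⟨w, hw, rfl⟩ := hz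
    rw [map_add, add_comm]
    exact Submodule.add_mem_sup (hJ2 _ hw) (Submodule.mem_map_of_mem hy)
  have hMH : ∀ x ∈ Nᗮ, H x ∈ Nᗮ := by
    intro x hx
    rw [Submodule.mem_orthogonal] at hx ⊢
    intro u hu
    rw [← hH]; exact hx _ (hNH u hu)
  have hMJ : ∀ x ∈ Nᗮ, J x ∈ Nᗮ := by
    intro x hx
    rw [Submodule.mem_orthogonal] at hx ⊢
    intro u hu
    have := hJ u x
    rw [hx _ (hNJ u hu)] at this; linarith
  have hKN : K ≤ N := le_sup_left
  have hM : Nᗮ = ⊥ := by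
    by_contra hne
    have : Nontrivial (Nᗮ : Submodule ℝ E) := Submodule.nontrivial_iff_ne_bot.2 hne
    have hsym : (H.restrict hMH).IsSymmetric := fun x y => hH x y
    obtain ⟨v, hv⟩ := (hsym.hasEigenvalue_iSup_of_finiteDimensional).exists_hasEigenvector
    have hv1 := hv.apply_eq_smul
    generalize (⨆ x : { x : (Nᗮ : Submodule ℝ E) // x ≠ 0 }, _ : ℝ) = μ at hv1
    have hv0 : (v : E) ≠ 0 := fun h => hv.2 (Subtype.ext h)
    have hHv : H (v : E) = μ • (v : E) := congrArg Subtype.val hv1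
    have hvM := v.2
    have hJv := hMJ _ hvM
    rw [Submodule.mem_orthogonal] at hvM hJv
    refine hmax (K ⊔ Submodule.span ℝ {(v : E)}) ⟨?_, ?_⟩ ?_
    · intro x hx
      obtain ⟨y, hy, z, hz, rfl⟩ := Submodule.mem_sup.1 hx
      obtain ⟨c, rfl⟩ := Submodule.mem_span_singleton.1 hz
      rw [map_add, map_smul, hHv]
      exact Submodule.add_mem_sup (hK1 _ hy) (Submodule.smul_mem _ _
        (Submodule.smul_mem _ _ (Submodule.mem_span_singleton_self _)))
    · intro x hx
      rw [Submodule.mem_orthogonal]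
      intro u hu
      obtain ⟨y, hy, z, hz, rfl⟩ := Submodule.mem_sup.1 hx
      obtain ⟨c, rfl⟩ := Submodule.mem_span_singleton.1 hz
      obtain ⟨y', hy', z', hz', rfl⟩ := Submodule.mem_sup.1 hu
      obtain ⟨d, rfl⟩ := Submodule.mem_span_singleton.1 hz'
      have e1 : inner ℝ y' (J y) = 0 := (Submodule.mem_orthogonal _ _).1 (hK2 y hy) y' hy'
      have e2 : inner ℝ y' (J v) = 0 := hJv _ (hKN hy')
      have e3 : inner ℝ (v : E) (J y) = 0 := by
        rw [real_inner_comm]; exact hvM _ (hNJ _ (hKN hy))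
      have e4 : inner ℝ (v : E) (J v) = 0 := by
        have := hJ v v
        rw [real_inner_comm] at this; linarith
      simp [inner_add_left, inner_add_right, inner_smul_left, inner_smul_right, e1, e2, e3, e4]
    · refine lt_of_le_of_ne le_sup_left fun h => hv0 ?_
      have hvK : (v : E) ∈ K := by
        rw [h]; exact (le_sup_right : _ ≤ K ⊔ _) (Submodule.mem_span_singleton_self _)
      exact inner_self_eq_zero.1 (hvM _ (hKN hvK))
  have hNtop : N = ⊤ := Submodule.orthogonal_eq_bot_iff.1 hM
  intro x hx
  have hxN : x ∈ N := hNtop ▸ Submodule.mem_top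
  obtain ⟨y, hy, z, hz, rfl⟩ := Submodule.mem_sup.1 hxN
  obtain ⟨w, hw, rfl⟩ := hz
  have hy' : y ∈ Kᗮ := by
    have := Kᗮ.sub_mem hx (hK2 w hw)
    simpa using this
  have : y = 0 := inner_self_eq_zero.1 ((Submodule.mem_orthogonal _ _).1 hy' y hy)
  subst this
  simpa using hJ2 w hw

theorem exists_reversing_involution {E : Type*} [NormedAddCommGroup E] [InnerProductSpace ℝ E]
    [FiniteDimensional ℝ E] (a : E →L[ℝ] E) (h1 : star a * a = 1) (h2 : a * star a = 1) :
    ∃ r : E →L[ℝ] E, star r = r ∧ r * r = 1 ∧ r * a * r = star a := by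
  have g1 : ∀ x, (star a) (a x) = x := fun x => congrArg (fun f : E →L[ℝ] E => f x) h1
  have g2 : ∀ x, a ((star a) x) = x := fun x => congrArg (fun f : E →L[ℝ] E => f x) h2
  have i1 : ∀ x y, inner ℝ (a x) y = inner ℝ x ((star a) y) := fun x y =>
    (ContinuousLinearMap.adjoint_inner_right a x y).symm
  have i2 : ∀ x y, inner ℝ ((star a) x) y = inner ℝ x (a y) := fun x y =>
    ContinuousLinearMap.adjoint_inner_left a y x
  obtain ⟨K, hK1, hK2, hK3⟩ := exists_adapted_subspace
    ((a + star a : E →L[ℝ] E) : E →ₗ[ℝ] E) ((a - star a : E →L[ℝ] E) : E →ₗ[ℝ] E)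
    (fun x y => by simp [inner_add_left, inner_add_right, i1, i2, add_comm])
    (fun x y => by simp [inner_sub_left, inner_sub_right, i1, i2])
    (fun x => by simp [g1, g2]; module)
    (fun x => by simp [g1, g2]; try abel)
  simp only [ContinuousLinearMap.coe_coe, add_apply,
    sub_apply] at hK1 hK2 hK3
  have hK4 : ∀ x ∈ Kᗮ, a x + (star a) x ∈ Kᗮ := by
    intro x hx
    rw [Submodule.mem_orthogonal] at hx ⊢
    intro u hu
    have := hx _ (hK1 u hu)
    rw [inner_add_left, i1, i2] at this
    rw [inner_add_right]; linarith
  have r1 : ∀ x ∈ K, K.reflection x = x := fun x hx =>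
    Submodule.reflection_mem_subspace_eq_self hx
  have r2 : ∀ x ∈ Kᗮ, K.reflection x = -x := fun x hx =>
    Submodule.reflection_mem_subspace_orthogonalComplement_eq_neg hx
  refine ⟨(K.reflection : E →L[ℝ] E), ?_, ?_, ?_⟩
  · rw [ContinuousLinearMap.star_eq_adjoint]
    symm
    rw [ContinuousLinearMap.eq_adjoint_iff]
    intro x y
    have := K.reflection.inner_map_map x (K.reflection y)
    simpa using this
  · ext x; simp
  · ext x
    obtain ⟨y, hy, z, hz, rfl⟩ := K.exists_add_mem_mem_orthogonal x
    have q1 := r1 _ (hK1 y hy)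
    have q2 := r2 _ (hK2 y hy)
    have q3 := r1 _ (hK3 z hz)
    have q4 := r2 _ (hK4 z hz)
    simp only [map_add, map_sub] at q1 q2 q3 q4
    have s1 : K.reflection (a y) = (star a) y := by
      have : (2 : ℝ) • K.reflection (a y) = (2 : ℝ) • (star a) y := by
        have e : (2 : ℝ) • K.reflection (a y) = (K.reflection (a y) + K.reflection ((star a) y))
            + (K.reflection (a y) - K.reflection ((star a) y)) := by module
        rw [e, q1, q2]; module
      exact smul_right_injective E (two_ne_zero (α := ℝ)) this
    have s2 : K.reflection (a z) = - (star a) z := by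
      have : (2 : ℝ) • K.reflection (a z) = (2 : ℝ) • (- (star a) z) := by
        have e : (2 : ℝ) • K.reflection (a z) = (K.reflection (a z) + K.reflection ((star a) z))
            + (K.reflection (a z) - K.reflection ((star a) z)) := by module
        rw [e, q4, q3]; module
      exact smul_right_injective E (two_ne_zero (α := ℝ)) this
    simp [r1 y hy, r2 z hz, s1, s2]

theorem orthogonal_product_of_two_involutions
    (n : ℕ) (A : Matrix.orthogonalGroup (Fin n) ℝ) :
    ∃ S T : Matrix.orthogonalGroup (Fin n) ℝ,
      S ^ 2 = 1 ∧ T ^ 2 = 1 ∧ A = S * T := by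
  let φ := Matrix.toEuclideanCLM (n := Fin n) (𝕜 := ℝ)
  have hA1 : star (A : Matrix (Fin n) (Fin n) ℝ) * A = 1 := Matrix.UnitaryGroup.star_mul_self A
  have hA2 : (A : Matrix (Fin n) (Fin n) ℝ) * star (A : Matrix (Fin n) (Fin n) ℝ) = 1 :=
    mul_eq_one_comm.1 hA1
  obtain ⟨r, hr1, hr2, hr3⟩ := exists_reversing_involution (φ A.1)
    (by rw [← map_star, ← map_mul, hA1, map_one]) (by rw [← map_star, ← map_mul, hA2, map_one])
  obtain ⟨s, rfl⟩ := (EquivLike.surjective φ) r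
  have t1 : star s = s := EquivLike.injective φ (by rw [map_star, hr1])
  have t2 : s * s = 1 := EquivLike.injective φ (by rw [map_mul, hr2, map_one])
  have t3 : s * A.1 * s = star A.1 := EquivLike.injective φ (by rw [map_mul, map_mul, map_star, hr3])
  let S : Matrix.orthogonalGroup (Fin n) ℝ :=
    ⟨s, Matrix.mem_unitaryGroup_iff.2 (by rw [t1, t2])⟩
  have hS : S * S = 1 := Subtype.ext t2
  refine ⟨S, S * A, by rw [pow_two, hS], ?_, by rw [← mul_assoc, hS, one_mul]⟩
  apply Subtype.ext
  change (s * A.1) ^ 2 = 1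
  rw [pow_two, ← mul_assoc, t3, hA1]
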